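/- For every nonnegative integer m, G_{5m+2}(q) ≡ −q^{3m+1} (mod Φ_{5m+2}(q)) in ℤ[q]; equivalently, the cyclotomic polynomial Φ_{5m+2}(q) divides G_{5m+2}(q) + q^{3m+1}. -/

import Mathlib

/-!
The proof evaluates a finite form of Schur's Rogers–Ramanujan identity at a root of unity.
Over a field and for `q ≠ 0`, with Gaussian binomials `[n; k]` for `k : ℤ`,

  `G_n(q) = ∑ j, (-1)^j q^(j(5j-3)/2) [n; ⌊(n-5j)/2⌋ + 1]`,

because the right-hand side satisfies the recurrence of `G_n`: applying both q-Pascal rules to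
the `j`-th term leaves a remainder of the form `T (j+1) - T j`, which telescopes
(`schurTerm_recurrence`, `eval_qFibG_eq_schurSum`).

At a primitive `N`-th root of unity, `[N; k]` vanishes unless `k = 0` or `k = N`
(`gauss_eq_zero_of_primitive`). For `N = 5m+2` only the index `j = -m` survives, and its
coefficient `(-1)^m ζ^(m(5m+3)/2)` equals `-ζ^(3m+1)` (`schurWeight_neg`). Since `Φ_N` is the
minimal polynomial of `ζ` over `ℤ`, this gives the divisibility.
-/

open Polynomial

/-- The Schur–Carlitz q-Fibonacci polynomials G: G₀ = 0, G₁ = 1,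
    Gₙ = Gₙ₋₁ + q^(n-1) Gₙ₋₂ for n ≥ 2. -/
noncomputable def qFibG : ℕ → Polynomial ℤ
  | 0 => 0
  | 1 => 1
  | (n + 2) => qFibG (n + 1) + X ^ (n + 1) * qFibG n

section

variable {K : Type*} [Field K]

/-- The Gaussian binomial coefficient `[n; k]` evaluated at `q`, for an arbitrary integer lower
index `k`, defined by one of the q-Pascal rules; it is `0` outside `0 ≤ k ≤ n`. -/
def gauss (q : K) : ℕ → ℤ → K
  | 0, k => if k = 0 then 1 else 0
  | n + 1, k => gauss q n (k - 1) + q ^ k * gauss q n k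

theorem gauss_succ (q : K) (n : ℕ) (k : ℤ) :
    gauss q (n + 1) k = gauss q n (k - 1) + q ^ k * gauss q n k := rfl

/-- The second q-Pascal rule. -/
theorem gauss_succ' {q : K} (hq : q ≠ 0) (n : ℕ) (k : ℤ) :
    gauss q (n + 1) k = q ^ ((n : ℤ) + 1 - k) * gauss q n (k - 1) + gauss q n k := by
  induction n generalizing k with
  | zero =>
    simp only [gauss]
    by_cases h1 : k = 1
    · subst h1; simp
    · by_cases h0 : k = 0
      · subst h0; simp
      · have : k - 1 ≠ 0 := by omega
        simp [h0, this]
  | succ n ih =>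
    have e : q ^ k * q ^ ((n : ℤ) + 1 - k) = q ^ (((n + 1 : ℕ) : ℤ) + 1 - k) * q ^ (k - 1) := by
      rw [← zpow_add₀ hq, ← zpow_add₀ hq]; congr 1; push_cast; ring
    have e2 : (n : ℤ) + 1 - (k - 1) = ((n + 1 : ℕ) : ℤ) + 1 - k := by push_cast; ring
    have s := gauss_succ q (n + 1) k
    have i1 := ih (k - 1)
    rw [e2] at i1
    have h1 := gauss_succ q n (k - 1)
    have h2 := gauss_succ q n k
    have h3 := ih k
    linear_combination s + i1 + q ^ k * h3 - q ^ (((n + 1 : ℕ) : ℤ) + 1 - k) * h1 - h2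
      + gauss q n (k - 1) * e

theorem gauss_eq_zero (q : K) (n : ℕ) (k : ℤ) (h : k < 0 ∨ (n : ℤ) < k) : gauss q n k = 0 := by
  induction n generalizing k with
  | zero =>
    have : k ≠ 0 := by push_cast at h; omega
    simp [gauss, this]
  | succ n ih =>
    push_cast at h
    rw [gauss_succ, ih _ (by omega), ih _ (by omega)]; simp

theorem gauss_self (q : K) (n : ℕ) : gauss q n n = 1 := by
  induction n with
  | zero => simp [gauss]
  | succ n ih =>
    rw [gauss_succ, gauss_eq_zero q n ((n + 1 : ℕ) : ℤ) (by push_cast; omega)]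
    simpa using ih

theorem gauss_absorb {q : K} (hq : q ≠ 0) (n : ℕ) (k : ℤ) :
    (1 - q ^ k) * gauss q (n + 1) k = (1 - q ^ (n + 1)) * gauss q n (k - 1) := by
  have e : q ^ k * q ^ ((n : ℤ) + 1 - k) = q ^ (n + 1) := by
    rw [← zpow_add₀ hq, ← zpow_natCast]; congr 1; push_cast; ring
  linear_combination gauss_succ q n k - q ^ k * gauss_succ' hq n k - gauss q n (k - 1) * e

theorem gauss_eq_zero_of_primitive {q : K} {N : ℕ} (hN : 0 < N) (h : IsPrimitiveRoot q N) (k : ℤ)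
    (h0 : k ≠ 0) (h1 : k ≠ N) : gauss q N k = 0 := by
  by_cases hr : k < 0 ∨ (N : ℤ) < k
  · exact gauss_eq_zero q N k hr
  · have hk : q ^ k ≠ 1 := fun hk => by
      have := Int.le_of_dvd (by omega) ((h.zpow_eq_one_iff_dvd k).1 hk)
      omega
    obtain ⟨n, rfl⟩ : ∃ n, N = n + 1 := ⟨N - 1, by omega⟩
    have := gauss_absorb (h.ne_zero (by omega)) n k
    rw [h.pow_eq_one, sub_self, zero_mul] at this
    exact (mul_eq_zero.1 this).resolve_left (sub_ne_zero.2 hk.symm)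

/-- The coefficient `(-1)^j q^(j(5j-3)/2)` in Schur's sum; the division is exact. -/
def schurWeight (q : K) (j : ℤ) : K := (-1) ^ j * q ^ (j * (5 * j - 3) / 2)

theorem schurWeight_succ {q : K} (hq : q ≠ 0) (j : ℤ) :
    schurWeight q j = -(schurWeight q (j + 1) * q ^ (-1 - 5 * j)) := by
  have e : j * (5 * j - 3) / 2 = (j + 1) * (5 * (j + 1) - 3) / 2 + (-1 - 5 * j) := by
    rw [← Int.add_mul_ediv_right _ _ (by norm_num)]; congr 1; ring
  unfold schurWeight
  rw [e, zpow_add₀ hq, zpow_add₀ (by norm_num : (-1 : K) ≠ 0)]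
  ring

/-- The `j`-th term of Schur's sum for `G_n`. -/
def schurTerm (q : K) (n : ℕ) (j : ℤ) : K :=
  schurWeight q j * gauss q n (((n : ℤ) - 5 * j) / 2 + 1)

/-- The telescoping certificate for the recurrence of `schurTerm`. -/
def schurCert (q : K) (n : ℕ) (j : ℤ) : K :=
  if ((n : ℤ) - 5 * j) % 2 = 0 then
    -(schurWeight q j * q ^ (((n : ℤ) - 5 * j) / 2 + 2) * gauss q n (((n : ℤ) - 5 * j) / 2 + 2))
  else 0

/-- The terms of Schur's sum satisfy the recurrence of `G_n` up to a telescoping difference. -/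
theorem schurTerm_recurrence {q : K} (hq : q ≠ 0) (n : ℕ) (j : ℤ) :
    schurTerm q (n + 2) j - schurTerm q (n + 1) j - q ^ (n + 1) * schurTerm q n j
      = schurCert q n (j + 1) - schurCert q n j := by
  rcases Int.even_or_odd' ((n : ℤ) - 5 * j) with ⟨a, ha | ha⟩
  · have d0 : ((n : ℤ) - 5 * j) / 2 = a := by omega
    have d1 : (((n + 1 : ℕ) : ℤ) - 5 * j) / 2 = a := by push_cast; omega
    have d2 : (((n + 2 : ℕ) : ℤ) - 5 * j) / 2 = a + 1 := by push_cast; omega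
    have c0 : ((n : ℤ) - 5 * j) % 2 = 0 := by omega
    have c1 : ¬ ((n : ℤ) - 5 * (j + 1)) % 2 = 0 := by omega
    simp only [schurTerm, schurCert, d0, d1, d2, if_pos c0, if_neg c1]
    have p1 := gauss_succ q (n + 1) (a + 2)
    have p2 := gauss_succ' hq n (a + 2)
    have e : q ^ (a + 2) * q ^ ((n : ℤ) + 1 - (a + 2)) = q ^ (n + 1) := by
      rw [← zpow_add₀ hq, ← zpow_natCast]; congr 1; push_cast; ring
    rw [show a + 2 - 1 = a + 1 by ring] at p1 p2
    rw [show a + 1 + 1 = a + 2 by ring]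
    linear_combination schurWeight q j * (p1 + q ^ (a + 2) * p2 + gauss q n (a + 1) * e)
  · have d0 : ((n : ℤ) - 5 * j) / 2 = a := by omega
    have d1 : (((n + 1 : ℕ) : ℤ) - 5 * j) / 2 = a + 1 := by push_cast; omega
    have d2 : (((n + 2 : ℕ) : ℤ) - 5 * j) / 2 = a + 1 := by push_cast; omega
    have d3 : ((n : ℤ) - 5 * (j + 1)) / 2 = a - 2 := by omega
    have c0 : ¬ ((n : ℤ) - 5 * j) % 2 = 0 := by omega
    have c1 : ((n : ℤ) - 5 * (j + 1)) % 2 = 0 := by omega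
    simp only [schurTerm, schurCert, d0, d1, d2, d3, if_neg c0, if_pos c1]
    have p1 := gauss_succ' hq (n + 1) (a + 2)
    have p2 := gauss_succ q n (a + 1)
    have e : q ^ (((n + 1 : ℕ) : ℤ) + 1 - (a + 2)) * q ^ (a + 1) = q ^ (n + 1) := by
      rw [← zpow_add₀ hq, ← zpow_natCast]; congr 1; push_cast; ring
    have e2 : q ^ (-1 - 5 * j) * q ^ (((n + 1 : ℕ) : ℤ) + 1 - (a + 2)) = q ^ a := by
      rw [← zpow_add₀ hq]; congr 1; push_cast; omega
    have w := schurWeight_succ hq j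
    rw [show a + 2 - 1 = a + 1 by ring] at p1
    rw [show a + 1 - 1 = a by ring] at p2
    rw [show a + 1 + 1 = a + 2 by ring, show a - 2 + 2 = a by ring]
    set c := q ^ (((n + 1 : ℕ) : ℤ) + 1 - (a + 2))
    linear_combination schurWeight q j * (p1 + c * p2 + gauss q n (a + 1) * e)
      + c * gauss q n a * w - schurWeight q (j + 1) * gauss q n a * e2

/-- Schur's sum truncated to `-M ≤ j < M`. -/
def schurSum (q : K) (M n : ℕ) : K :=
  ∑ i ∈ Finset.range (2 * M), schurTerm q n ((i : ℤ) - M)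

theorem schurSum_recurrence {q : K} (hq : q ≠ 0) {M n : ℕ} (h : n < M) :
    schurSum q M (n + 2) = schurSum q M (n + 1) + q ^ (n + 1) * schurSum q M n := by
  have key : schurSum q M (n + 2) - schurSum q M (n + 1) - q ^ (n + 1) * schurSum q M n = 0 := by
    unfold schurSum
    rw [Finset.mul_sum, ← Finset.sum_sub_distrib, ← Finset.sum_sub_distrib]
    have : ∀ i ∈ Finset.range (2 * M),
        schurTerm q (n + 2) ((i : ℤ) - M) - schurTerm q (n + 1) ((i : ℤ) - M)
          - q ^ (n + 1) * schurTerm q n ((i : ℤ) - M)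
        = schurCert q n (((i + 1 : ℕ) : ℤ) - M) - schurCert q n ((i : ℤ) - M) := by
      intro i _
      rw [schurTerm_recurrence hq]
      congr 2; push_cast; ring
    rw [Finset.sum_congr rfl this,
      Finset.sum_range_sub (fun i : ℕ => schurCert q n ((i : ℤ) - M)) (2 * M)]
    -- Both boundary terms have a lower index outside `[0, n]`.
    have z1 : schurCert q n (((2 * M : ℕ) : ℤ) - M) = 0 := by
      unfold schurCert
      rw [gauss_eq_zero q n _ (by push_cast; omega)]; simp
    have z2 : schurCert q n (((0 : ℕ) : ℤ) - M) = 0 := by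
      unfold schurCert
      rw [gauss_eq_zero q n _ (by push_cast; omega)]; simp
    rw [z1, z2, sub_zero]
  linear_combination key

/-- If all terms except the one at `j` vanish, Schur's sum is that term. -/
theorem schurSum_eq_single (q : K) (M n : ℕ) (j : ℤ) (h1 : -(M : ℤ) ≤ j) (h2 : j < M)
    (h : ∀ i, i ≠ j → schurTerm q n i = 0) : schurSum q M n = schurTerm q n j := by
  unfold schurSum
  rw [Finset.sum_eq_single (j + M).toNat]
  · congr 1; omega
  · intro i _ hi
    exact h _ (by omega)
  · intro hi
    exact absurd (Finset.mem_range.2 (by omega)) hi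

/-- Schur's finite Rogers–Ramanujan identity. The truncation at `M` loses nothing for `n ≤ M`. -/
theorem eval_qFibG_eq_schurSum {q : K} (hq : q ≠ 0) {M : ℕ} (hM : 0 < M) (n : ℕ) (h : n ≤ M) :
    aeval q (qFibG n) = schurSum q M n := by
  induction n using Nat.strong_induction_on with
  | _ n ih =>
    match n, ih, h with
    | 0, _, _ =>
      have : ∀ j : ℤ, schurTerm q 0 j = 0 := fun j => by
        unfold schurTerm
        rw [gauss_eq_zero q 0 _ (by push_cast; omega), mul_zero]
      simp [qFibG, schurSum, this]
    | 1, _, _ =>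
      rw [schurSum_eq_single q M 1 0 (by omega) (by omega)]
      · have := gauss_self q 1
        simp only [Nat.cast_one] at this
        simp [qFibG, schurTerm, schurWeight, this]
      · intro j hj
        unfold schurTerm
        rw [gauss_eq_zero q 1 _ (by push_cast; omega), mul_zero]
    | n + 2, ih, h =>
      rw [schurSum_recurrence hq (by omega), ← ih n (by omega) (by omega),
        ← ih (n + 1) (by omega) (by omega)]
      simp [qFibG]

/-- The surviving coefficient. For odd `m` the exponents agree modulo `N = 5m+2`; for even `m`
they differ by an odd multiple of `N / 2`, and `q ^ (N / 2) = -1`. -/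
theorem schurWeight_neg {q : K} (m : ℕ) (h : IsPrimitiveRoot q (5 * m + 2)) :
    schurWeight q (-(m : ℤ)) = -q ^ (3 * m + 1) := by
  have hq : q ≠ 0 := h.ne_zero (by omega)
  rcases Nat.even_or_odd' m with ⟨t, rfl | rfl⟩
  · have half : q ^ (5 * t + 1) = -1 := by
      have hs : (q ^ (5 * t + 1)) ^ 2 = 1 := by
        rw [← pow_mul, ← h.pow_eq_one]; congr 1; ring
      rcases mul_self_eq_one_iff.1 ((sq _).symm.trans hs) with h1 | h1
      · exact absurd h1 (h.pow_ne_one_of_pos_of_lt (by omega) (by omega))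
      · exact h1
    have e : (-((2 * t : ℕ) : ℤ)) * (5 * (-((2 * t : ℕ) : ℤ)) - 3) / 2
        = ((3 * (2 * t) + 1 : ℕ) : ℤ) + ((5 * t + 1 : ℕ) : ℤ) * (2 * (t : ℤ) - 1) := by
      apply Int.ediv_eq_of_eq_mul_right (by norm_num)
      push_cast; ring
    have s1 : (-1 : K) ^ (-((2 * t : ℕ) : ℤ)) = 1 :=
      Even.neg_one_zpow ⟨-(t : ℤ), by push_cast; ring⟩
    have s2 : (-1 : K) ^ (2 * (t : ℤ) - 1) = -1 :=
      Odd.neg_one_zpow ⟨(t : ℤ) - 1, by ring⟩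
    unfold schurWeight
    rw [e, s1, zpow_add₀ hq, zpow_mul, zpow_natCast, zpow_natCast, half, s2]
    ring
  · have e : (-((2 * t + 1 : ℕ) : ℤ)) * (5 * (-((2 * t + 1 : ℕ) : ℤ)) - 3) / 2
        = ((3 * (2 * t + 1) + 1 : ℕ) : ℤ) + ((5 * (2 * t + 1) + 2 : ℕ) : ℤ) * (t : ℤ) := by
      apply Int.ediv_eq_of_eq_mul_right (by norm_num)
      push_cast; ring
    have s1 : (-1 : K) ^ (-((2 * t + 1 : ℕ) : ℤ)) = -1 :=
      Odd.neg_one_zpow ⟨-(t : ℤ) - 1, by push_cast; ring⟩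
    unfold schurWeight
    rw [e, s1, zpow_add₀ hq, zpow_mul, zpow_natCast, zpow_natCast q (5 * (2 * t + 1) + 2), h.pow_eq_one, one_zpow]
    ring

theorem aeval_qFibG_primitive {q : K} (m : ℕ) (h : IsPrimitiveRoot q (5 * m + 2)) :
    aeval q (qFibG (5 * m + 2)) = -q ^ (3 * m + 1) := by
  have hq : q ≠ 0 := h.ne_zero (by omega)
  rw [eval_qFibG_eq_schurSum hq (M := 5 * m + 2) (by omega) _ le_rfl,
    schurSum_eq_single q _ _ (-(m : ℤ)) (by push_cast; omega) (by push_cast; omega)]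
  · have : (((5 * m + 2 : ℕ) : ℤ) - 5 * (-(m : ℤ))) / 2 + 1 = ((5 * m + 2 : ℕ) : ℤ) := by
      push_cast; omega
    rw [schurTerm, this, gauss_self, mul_one, schurWeight_neg m h]
  · intro j hj
    unfold schurTerm
    rw [gauss_eq_zero_of_primitive (by omega) h _ (by push_cast; omega) (by push_cast; omega),
      mul_zero]

end

theorem qFibG_mod_cyclotomic_6 (m : ℕ) :
    Polynomial.cyclotomic (5 * m + 2) ℤ ∣ (qFibG (5 * m + 2) + X ^ (3 * m + 1)) := by
  have h := Complex.isPrimitiveRoot_exp (5 * m + 2) (by omega)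
  rw [Polynomial.cyclotomic_eq_minpoly h (by omega)]
  apply minpoly.isIntegrallyClosed_dvd (h.isIntegral (by omega))
  rw [map_add, aeval_qFibG_primitive m h]
  simp
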